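/- For every b > 0, every integer d ≥ 3 and every real p with 1/(d-1) < p < 1 there exist c, C, δ, ε, R > 0 such that: if 𝒢 = (V,E) is a regular (b,d)-expander on n vertices with girth at least R, then there exists a matching M ⊆ E with |M| ≥ δn such that the graph 𝒢₀ = (V, E∖M) satisfies: the bond percolation G₀ ∼ (𝒢₀)_p contains a connected component with at least εn vertices with probability at least 1 − C·exp(−c n). -/

import Mathlib

open scoped Classical symmDiff

noncomputable section

namespace Percolation

variable {V : Type} [Fintype V] [DecidableEq V]

/-- The edge set of `G` as a finset. -/
noncomputable def edgeFinset' (G : SimpleGraph V) : Finset (Sym2 V) :=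
  Finset.univ.filter (· ∈ G.edgeSet)

/-- Probability that bond percolation on `G` with parameter `p` produces a spanning
subgraph satisfying `P`. -/
noncomputable def percProb (G : SimpleGraph V) (p : ℝ) (P : SimpleGraph V → Prop) : ℝ :=
  ∑ s ∈ (edgeFinset' G).powerset,
    (p ^ s.card * (1 - p) ^ ((edgeFinset' G).card - s.card)) *
      (if P (SimpleGraph.fromEdgeSet (↑s)) then 1 else 0)

/-- Joint probability for two independent bond percolations on `G`. -/
noncomputable def percProb2 (G : SimpleGraph V) (p₁ p₂ : ℝ)
    (P : SimpleGraph V → SimpleGraph V → Prop) : ℝ :=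
  ∑ s ∈ (edgeFinset' G).powerset, ∑ t ∈ (edgeFinset' G).powerset,
    (p₁ ^ s.card * (1 - p₁) ^ ((edgeFinset' G).card - s.card)) *
    (p₂ ^ t.card * (1 - p₂) ^ ((edgeFinset' G).card - t.card)) *
      (if P (SimpleGraph.fromEdgeSet (↑s)) (SimpleGraph.fromEdgeSet (↑t)) then 1 else 0)

/-- Number of edges of `G` joining `S` to its complement. -/
noncomputable def cutCard (G : SimpleGraph V) (S : Finset V) : ℕ :=
  ((edgeFinset' G).filter (fun e => ∃ x ∈ S, ∃ y, y ∉ S ∧ e = s(x, y))).card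

/-- `G` is a `(b,d)`-expander: max degree at most `d`, and every vertex set of size at most
`n/2` has at least `b|S|` edges to its complement. -/
def IsExpander (G : SimpleGraph V) (b : ℝ) (d : ℕ) : Prop :=
  (∀ v, (G.neighborSet v).ncard ≤ d) ∧
  ∀ S : Finset V, (S.card : ℝ) ≤ Fintype.card V / 2 → b * S.card ≤ cutCard G S

/-- `G` is a regular `(b,d)`-expander. -/
def IsRegularExpander (G : SimpleGraph V) (b : ℝ) (d : ℕ) : Prop :=
  IsExpander G b d ∧ ∀ v, (G.neighborSet v).ncard = d

/-- The vertices of the connected component `c` of `G`. -/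
noncomputable def compVerts (G : SimpleGraph V) (c : G.ConnectedComponent) : Finset V :=
  Finset.univ.filter (fun v => G.connectedComponentMk v = c)

/-- The edges of the connected component `c` of `G`. -/
noncomputable def compEdges (G : SimpleGraph V) (c : G.ConnectedComponent) : Finset (Sym2 V) :=
  (edgeFinset' G).filter (fun e => ∀ v ∈ e, G.connectedComponentMk v = c)

/-- `c` is a largest connected component of `G`. -/
def IsLargestComp (G : SimpleGraph V) (c : G.ConnectedComponent) : Prop :=
  ∀ c' : G.ConnectedComponent, (compVerts G c').card ≤ (compVerts G c).card

/-- The 2-core of the connected component `c` of `G` : the maximal subgraph of `G`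
supported inside `c` all of whose vertices have degree at least 2. -/
noncomputable def twoCoreComp (G : SimpleGraph V) (c : G.ConnectedComponent) : SimpleGraph V :=
  sSup {H : SimpleGraph V | H ≤ G ∧ (∀ v ∈ H.support, G.connectedComponentMk v = c) ∧
    ∀ v ∈ H.support, 2 ≤ (H.neighborSet v).ncard}

/-- The event `A^R_{x,y}(H)`: the connected component of `y` in `H` with the edge `xy`
removed (if present) has at least `R` vertices. -/
def eventA (H : SimpleGraph V) (R : ℕ) (x y : V) : Prop :=
  R ≤ (compVerts (H.deleteEdges {s(x, y)})
        ((H.deleteEdges {s(x, y)}).connectedComponentMk y)).card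

/-- `E₁(H)`: edges `xy` of `H` such that `A^R_{x,y}` or `A^R_{y,x}` holds. -/
noncomputable def E1set (H : SimpleGraph V) (R : ℕ) : Finset (Sym2 V) :=
  (edgeFinset' H).filter (fun e => ∃ x y, e = s(x, y) ∧ (eventA H R x y ∨ eventA H R y x))

/-- `V₁(H)`: vertices `x` such that for some `y`, `xy ∈ E(H)` and `A^R_{x,y}` holds. -/
noncomputable def V1set (H : SimpleGraph V) (R : ℕ) : Finset V :=
  Finset.univ.filter (fun x => ∃ y, H.Adj x y ∧ eventA H R x y)

/-- `E₂(H)`: edges `xy` of `H` such that both `A^R_{x,y}` and `A^R_{y,x}` hold. -/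
noncomputable def E2set (H : SimpleGraph V) (R : ℕ) : Finset (Sym2 V) :=
  (edgeFinset' H).filter (fun e => ∃ x y, e = s(x, y) ∧ eventA H R x y ∧ eventA H R y x)

/-- `V₂(H)`: vertices incident to an edge of `E₂(H)`. -/
noncomputable def V2set (H : SimpleGraph V) (R : ℕ) : Finset V :=
  Finset.univ.filter (fun x => ∃ e ∈ E2set H R, x ∈ e)

/-- `V̄₁(H)`: vertices `y` such that `A^R_{x,y}(H)` holds for some `x`. -/
noncomputable def Vbar1 (H : SimpleGraph V) (R : ℕ) : Finset V :=
  Finset.univ.filter (fun y => ∃ x, eventA H R x y)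

/-- `S` is `k`-thick in `H`: a union of pairwise disjoint subsets, each of size at least
`k`, each inducing a connected subgraph of `H`. -/
def IsThick (H : SimpleGraph V) (k : ℕ) (S : Finset V) : Prop :=
  ∃ P : Finset (Finset V),
    (∀ T ∈ P, k ≤ T.card ∧ (H.induce (↑T : Set V)).Connected) ∧
    (↑P : Set (Finset V)).PairwiseDisjoint id ∧ S = P.biUnion id

/-- `S` is a separator of `K`. -/
def IsSeparator {W : Type} [Fintype W] (K : SimpleGraph W) (S : Finset W) : Prop :=
  ∃ A B : Finset W, Disjoint A B ∧ Disjoint A S ∧ Disjoint B S ∧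
    (∀ w, w ∈ A ∨ w ∈ B ∨ w ∈ S) ∧
    (∀ a ∈ A, ∀ b ∈ B, ¬ K.Adj a b) ∧
    3 * A.card ≤ 2 * Fintype.card W ∧ 3 * B.card ≤ 2 * Fintype.card W

set_option linter.unusedSectionVars false

section BernoulliExpectation

variable {α : Type*}

/-- The expectation of `f s`, where `s` is the random subset of `F` that contains each element
independently with probability `p`. -/
def subsetExp (F : Finset α) (p : ℝ) (f : Finset α → ℝ) : ℝ :=
  ∑ s ∈ F.powerset, (p ^ s.card * (1 - p) ^ (F.card - s.card)) * f s

lemma subsetExp_empty (p : ℝ) (f : Finset α → ℝ) : subsetExp ∅ p f = f ∅ := by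
  simp [subsetExp]

lemma subsetExp_congr {F : Finset α} {p : ℝ} {f g : Finset α → ℝ}
    (h : ∀ s ⊆ F, f s = g s) : subsetExp F p f = subsetExp F p g :=
  Finset.sum_congr rfl fun s hs => by rw [h s (Finset.mem_powerset.1 hs)]

lemma subsetExp_mono {F : Finset α} {p : ℝ} (hp0 : 0 ≤ p) (hp1 : p ≤ 1)
    {f g : Finset α → ℝ} (h : ∀ s ⊆ F, f s ≤ g s) : subsetExp F p f ≤ subsetExp F p g := by
  refine Finset.sum_le_sum fun s hs => ?_
  have : 0 ≤ 1 - p := by linarith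
  exact mul_le_mul_of_nonneg_left (h s (Finset.mem_powerset.1 hs)) (by positivity)

lemma subsetExp_const_mul (F : Finset α) (p c : ℝ) (f : Finset α → ℝ) :
    subsetExp F p (fun s => c * f s) = c * subsetExp F p f := by
  unfold subsetExp
  rw [Finset.mul_sum]
  exact Finset.sum_congr rfl fun s _ => by ring

lemma subsetExp_add (F : Finset α) (p : ℝ) (f g : Finset α → ℝ) :
    subsetExp F p (fun s => f s + g s) = subsetExp F p f + subsetExp F p g := by
  unfold subsetExp
  rw [← Finset.sum_add_distrib]
  exact Finset.sum_congr rfl fun s _ => by ring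

lemma subsetExp_sum {ι : Type*} (T : Finset ι) (F : Finset α) (p : ℝ) (f : ι → Finset α → ℝ) :
    subsetExp F p (fun s => ∑ i ∈ T, f i s) = ∑ i ∈ T, subsetExp F p (f i) := by
  unfold subsetExp
  rw [Finset.sum_comm]
  exact Finset.sum_congr rfl fun s _ => by rw [Finset.mul_sum]

variable [DecidableEq α]

lemma subsetExp_insert {F : Finset α} {a : α} (ha : a ∉ F) (p : ℝ) (f : Finset α → ℝ) :
    subsetExp (insert a F) p f =
      p * subsetExp F p (fun s => f (insert a s)) + (1 - p) * subsetExp F p f := by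
  unfold subsetExp
  rw [Finset.sum_powerset_insert ha, add_comm, Finset.mul_sum, Finset.mul_sum]
  congr 1
  · refine Finset.sum_congr rfl fun s hs => ?_
    have has : a ∉ s := fun h => ha (Finset.mem_powerset.1 hs h)
    rw [Finset.card_insert_of_notMem ha, Finset.card_insert_of_notMem has,
      Nat.add_sub_add_right]
    ring
  · refine Finset.sum_congr rfl fun s hs => ?_
    have hc := Finset.card_le_card (Finset.mem_powerset.1 hs)
    rw [Finset.card_insert_of_notMem ha, Nat.succ_sub hc, pow_succ]
    ring

lemma subsetExp_const (F : Finset α) (p c : ℝ) : subsetExp F p (fun _ => c) = c := by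
  induction F using Finset.induction_on with
  | empty => rw [subsetExp_empty]
  | insert a F ha ih => rw [subsetExp_insert ha, ih]; ring

lemma subsetExp_union {E F : Finset α} (h : Disjoint E F) (p : ℝ) (f : Finset α → ℝ) :
    subsetExp (E ∪ F) p f = subsetExp E p (fun s => subsetExp F p (fun t => f (s ∪ t))) := by
  induction E using Finset.induction_on generalizing f with
  | empty => simp [subsetExp_empty]
  | insert a E ha ih =>
    rw [Finset.disjoint_insert_left] at h
    have haEF : a ∉ E ∪ F := by simp [ha, h.1]
    rw [Finset.insert_union, subsetExp_insert haEF, subsetExp_insert ha, ih h.2, ih h.2]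
    simp only [Finset.insert_union]

/-- The union of independent random subsets is again a random subset. -/
lemma subsetExp_sprinkle (F : Finset α) (p₁ p₂ : ℝ) (f : Finset α → ℝ) :
    subsetExp F (1 - (1 - p₁) * (1 - p₂)) f =
      subsetExp F p₁ (fun s => subsetExp F p₂ (fun t => f (s ∪ t))) := by
  induction F using Finset.induction_on generalizing f with
  | empty => simp [subsetExp_empty]
  | insert a F ha ih =>
    simp only [subsetExp_insert ha, ih, subsetExp_add, subsetExp_const_mul,
      Finset.insert_union, Finset.union_insert, Finset.insert_idem]
    ring

lemma subsetExp_subset_indicator (E : Finset α) (p : ℝ) :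
    subsetExp E p (fun s => if E ⊆ s then 1 else 0) = p ^ E.card := by
  unfold subsetExp
  rw [Finset.sum_eq_single_of_mem E (Finset.mem_powerset_self E)]
  · simp
  · intro s hs hne
    simp only
    rw [if_neg fun h => hne (Finset.Subset.antisymm (Finset.mem_powerset.1 hs) h), mul_zero]

/-- The probability that a random subset contains no member of a family of pairwise disjoint
sets of size at most `L`. -/
lemma subsetExp_no_member_subset_le {p : ℝ} (hp0 : 0 ≤ p) (hp1 : p ≤ 1) (L : ℕ)
    (P : Finset (Finset α)) (F : Finset α) (hPF : ∀ E ∈ P, E ⊆ F)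
    (hcard : ∀ E ∈ P, E.card ≤ L) (hdisj : (P : Set (Finset α)).PairwiseDisjoint id) :
    subsetExp F p (fun s => if ∀ E ∈ P, ¬ E ⊆ s then 1 else 0) ≤ (1 - p ^ L) ^ P.card := by
  induction P using Finset.induction_on generalizing F with
  | empty => simp [subsetExp_const]
  | insert E P hE ih =>
    have hEF : E ⊆ F := hPF E (by simp)
    have hEP : ∀ E' ∈ P, Disjoint E E' := fun E' hE' =>
      hdisj (by simp) (by simp [hE']) (fun h => hE (h ▸ hE'))
    have hF : F = E ∪ (F \ E) := (Finset.union_sdiff_of_subset hEF).symm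
    rw [hF, subsetExp_union Finset.disjoint_sdiff]
    have key : ∀ s ⊆ E, subsetExp (F \ E) p
        (fun t => if ∀ E' ∈ insert E P, ¬ E' ⊆ s ∪ t then (1 : ℝ) else 0) ≤
        (1 - p ^ L) ^ P.card * (1 - (if E ⊆ s then 1 else 0)) := by
      intro s hs
      by_cases hEs : E ⊆ s
      · rw [if_pos hEs, sub_self, mul_zero]
        refine (subsetExp_congr (g := fun _ => 0) fun t _ => if_neg fun h => ?_).trans_le
          (subsetExp_const _ _ _).le
        exact h E (by simp) (hEs.trans Finset.subset_union_left)
      · rw [if_neg hEs, sub_zero, mul_one]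
        refine le_trans (subsetExp_mono hp0 hp1 fun t _ => ?_) (ih (F \ E) ?_ ?_ ?_)
        · have : (∀ E' ∈ insert E P, ¬ E' ⊆ s ∪ t) → ∀ E' ∈ P, ¬ E' ⊆ t := fun h E' hE' hsub =>
            h E' (by simp [hE']) (hsub.trans Finset.subset_union_right)
          by_cases h : ∀ E' ∈ insert E P, ¬ E' ⊆ s ∪ t
          · rw [if_pos h, if_pos (this h)]
          · rw [if_neg h]
            split_ifs <;> norm_num
        · exact fun E' hE' => Finset.subset_sdiff.2
            ⟨hPF E' (by simp [hE']), (hEP E' hE').symm⟩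
        · exact fun E' hE' => hcard E' (by simp [hE'])
        · exact hdisj.subset (by simp)
    refine (subsetExp_mono hp0 hp1 key).trans ?_
    rw [subsetExp_const_mul, Finset.card_insert_of_notMem hE, pow_succ]
    have hpL : p ^ L ≤ 1 := pow_le_one₀ hp0 hp1
    have h1 : subsetExp E p (fun s => 1 - (if E ⊆ s then (1 : ℝ) else 0)) = 1 - p ^ E.card := by
      have := subsetExp_add E p (fun s => 1 - (if E ⊆ s then (1 : ℝ) else 0))
        (fun s => if E ⊆ s then (1 : ℝ) else 0)
      simp only [sub_add_cancel, subsetExp_const, subsetExp_subset_indicator] at this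
      linarith
    rw [h1]
    have h2 : p ^ L ≤ p ^ E.card := pow_le_pow_of_le_one hp0 hp1 (hcard E (by simp))
    exact mul_le_mul_of_nonneg_left (by linarith) (pow_nonneg (by linarith) _)

/-- A two-point version of Hoeffding's lemma. -/
lemma two_point_exp_le {p a b t : ℝ} (hp0 : 0 ≤ p) (hp1 : p ≤ 1) (hab : |a - b| ≤ t)
    (ht : t ≤ 1) :
    p * Real.exp (-a) + (1 - p) * Real.exp (-b) ≤
      Real.exp (-(p * a + (1 - p) * b) + t ^ 2) := by
  set m := p * a + (1 - p) * b with hm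
  have ht0 : 0 ≤ t := (abs_nonneg _).trans hab
  have bound : ∀ x : ℝ, |x| ≤ t → Real.exp x ≤ 1 + x + t ^ 2 := by
    intro x hx
    have h1 := (abs_le.1 (Real.abs_exp_sub_one_sub_id_le (hx.trans ht))).2
    have h2 : x ^ 2 ≤ t ^ 2 := sq_le_sq' (abs_le.1 hx).1 (abs_le.1 hx).2
    linarith
  have h1 : Real.exp (m - a) ≤ 1 + (m - a) + t ^ 2 := by
    apply bound
    rw [show m - a = -((1 - p) * (a - b)) by rw [hm]; ring, abs_neg, abs_mul,
      abs_of_nonneg (by linarith : 0 ≤ 1 - p)]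
    nlinarith [abs_nonneg (a - b)]
  have h2 : Real.exp (m - b) ≤ 1 + (m - b) + t ^ 2 := by
    apply bound
    rw [show m - b = p * (a - b) by rw [hm]; ring, abs_mul, abs_of_nonneg hp0]
    nlinarith [abs_nonneg (a - b)]
  have h3 : Real.exp (-a) = Real.exp (-m) * Real.exp (m - a) := by
    rw [← Real.exp_add]; ring_nf
  have h4 : Real.exp (-b) = Real.exp (-m) * Real.exp (m - b) := by
    rw [← Real.exp_add]; ring_nf
  have h5 : p * Real.exp (m - a) + (1 - p) * Real.exp (m - b) ≤ 1 + t ^ 2 := by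
    have e1 := mul_le_mul_of_nonneg_left h1 hp0
    have e2 := mul_le_mul_of_nonneg_left h2 (by linarith : 0 ≤ 1 - p)
    have e3 : p * (1 + (m - a) + t ^ 2) + (1 - p) * (1 + (m - b) + t ^ 2) = 1 + t ^ 2 := by
      rw [hm]; ring
    linarith
  have h6 : 1 + t ^ 2 ≤ Real.exp (t ^ 2) := by linarith [Real.add_one_le_exp (t ^ 2)]
  rw [Real.exp_add, h3, h4]
  calc p * (Real.exp (-m) * Real.exp (m - a)) + (1 - p) * (Real.exp (-m) * Real.exp (m - b))
      = Real.exp (-m) * (p * Real.exp (m - a) + (1 - p) * Real.exp (m - b)) := by ring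
    _ ≤ _ := mul_le_mul_of_nonneg_left (h5.trans h6) (Real.exp_pos _).le

/-- The bounded differences inequality, in exponential-moment form. -/
lemma subsetExp_exp_neg_le {p : ℝ} (hp0 : 0 ≤ p) (hp1 : p ≤ 1) {t : ℝ} (ht : t ≤ 1)
    (F : Finset α) (f : Finset α → ℝ) (hf : ∀ a s, |f (insert a s) - f s| ≤ t) :
    subsetExp F p (fun s => Real.exp (-f s)) ≤
      Real.exp (-subsetExp F p f + F.card * t ^ 2) := by
  induction F using Finset.induction_on generalizing f with
  | empty => simp [subsetExp_empty]
  | insert a F ha ih =>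
    rw [subsetExp_insert ha, subsetExp_insert ha, Finset.card_insert_of_notMem ha]
    have h1 := ih (fun s => f (insert a s)) (fun c s => by
      have := hf c (insert a s); rwa [Finset.insert_comm])
    have h2 := ih f hf
    have hd : |subsetExp F p (fun s => f (insert a s)) - subsetExp F p f| ≤ t := by
      have e1 : subsetExp F p (fun s => f (insert a s)) ≤ subsetExp F p f + t := by
        rw [← subsetExp_const F p t, ← subsetExp_add]
        exact subsetExp_mono hp0 hp1 fun s _ => by
          linarith [(abs_le.1 (hf a s)).2]
      have e2 : subsetExp F p f ≤ subsetExp F p (fun s => f (insert a s)) + t := by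
        rw [← subsetExp_const F p t, ← subsetExp_add]
        exact subsetExp_mono hp0 hp1 fun s _ => by
          linarith [(abs_le.1 (hf a s)).1]
      exact abs_le.2 ⟨by linarith, by linarith⟩
    have h3 := two_point_exp_le hp0 hp1 hd ht
    rw [Real.exp_add] at h1 h2
    have e1 := mul_le_mul_of_nonneg_left h1 hp0
    have e2 := mul_le_mul_of_nonneg_left h2 (by linarith : 0 ≤ 1 - p)
    have e3 := mul_le_mul_of_nonneg_right h3 (Real.exp_pos (F.card * t ^ 2)).le
    rw [← Real.exp_add] at e3
    push_cast
    rw [show -(p * subsetExp F p (fun s => f (insert a s)) + (1 - p) * subsetExp F p f) +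
      ((F.card : ℝ) + 1) * t ^ 2 = -(p * subsetExp F p (fun s => f (insert a s)) +
      (1 - p) * subsetExp F p f) + t ^ 2 + F.card * t ^ 2 by ring]
    linarith

end BernoulliExpectation

section Connectors

/-- The edges of `F` joining `S` to its complement. -/
def cutEdges (F : Finset (Sym2 V)) (S : Finset V) : Finset (Sym2 V) :=
  F.filter (fun e => ∃ x ∈ S, ∃ y, y ∉ S ∧ e = s(x, y))

/-- The edge set `E` contains a path from `A` to `B`. -/
def Connects (E : Finset (Sym2 V)) (A B : Finset V) : Prop :=
  ∃ a ∈ A, ∃ b ∈ B, (SimpleGraph.fromEdgeSet (E : Set (Sym2 V))).Reachable a b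

/-- The `i`-th breadth-first layer around `A` in the graph with edge set `F`. -/
def bfsLayer (F : Finset (Sym2 V)) (A : Finset V) : ℕ → Finset V
  | 0 => A
  | i + 1 => bfsLayer F A i ∪ Finset.univ.filter (fun y => ∃ x ∈ bfsLayer F A i, s(x, y) ∈ F)

lemma fromEdgeSet_reachable_mono {E E' : Finset (Sym2 V)} (h : E ⊆ E') {a b : V}
    (hab : (SimpleGraph.fromEdgeSet (E : Set (Sym2 V))).Reachable a b) :
    (SimpleGraph.fromEdgeSet (E' : Set (Sym2 V))).Reachable a b :=
  hab.mono (SimpleGraph.fromEdgeSet_mono (Finset.coe_subset.2 h))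

lemma fromEdgeSet_reachable_of_mem {E : Finset (Sym2 V)} {a b : V} (h : s(a, b) ∈ E) :
    (SimpleGraph.fromEdgeSet (E : Set (Sym2 V))).Reachable a b := by
  by_cases hab : a = b
  · rw [hab]
  · exact SimpleGraph.Adj.reachable ((SimpleGraph.fromEdgeSet_adj _).2 ⟨h, hab⟩)

lemma exists_reachable_of_mem_bfsLayer (F : Finset (Sym2 V)) (A : Finset V) (i : ℕ) :
    ∀ y ∈ bfsLayer F A i, ∃ E ⊆ F, E.card ≤ i ∧ ∃ a ∈ A,
      (SimpleGraph.fromEdgeSet (E : Set (Sym2 V))).Reachable a y := by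
  induction i with
  | zero => exact fun y hy => ⟨∅, by simp, by simp, y, hy, SimpleGraph.Reachable.refl y⟩
  | succ i ih =>
    intro y hy
    rw [bfsLayer, Finset.mem_union, Finset.mem_filter] at hy
    rcases hy with hy | ⟨-, x, hx, hxy⟩
    · obtain ⟨E, hE, hc, h⟩ := ih y hy
      exact ⟨E, hE, hc.trans (Nat.le_succ i), h⟩
    · obtain ⟨E, hE, hc, a, ha, h⟩ := ih x hx
      refine ⟨insert s(x, y) E, Finset.insert_subset hxy hE,
        (Finset.card_insert_le _ _).trans (Nat.succ_le_succ hc), a, ha, ?_⟩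
      exact (fromEdgeSet_reachable_mono (Finset.subset_insert _ _) h).trans
        (fromEdgeSet_reachable_of_mem (Finset.mem_insert_self _ _))

lemma card_edges_bfsLayer_succ (F : Finset (Sym2 V)) (A : Finset V) (i : ℕ) :
    (F.filter (fun e => ∀ x ∈ e, x ∈ bfsLayer F A i)).card + (cutEdges F (bfsLayer F A i)).card ≤
      (F.filter (fun e => ∀ x ∈ e, x ∈ bfsLayer F A (i + 1))).card := by
  rw [← Finset.card_union_of_disjoint]
  · refine Finset.card_le_card fun e he => ?_
    rw [Finset.mem_union, Finset.mem_filter, cutEdges, Finset.mem_filter] at he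
    rw [Finset.mem_filter]
    rcases he with ⟨heF, he⟩ | ⟨heF, x, hx, y, hy, rfl⟩
    · exact ⟨heF, fun x hx => Finset.mem_union_left _ (he x hx)⟩
    · refine ⟨heF, fun z hz => ?_⟩
      rcases Sym2.mem_iff.1 hz with rfl | rfl
      · exact Finset.mem_union_left _ hx
      · exact Finset.mem_union_right _ (Finset.mem_filter.2 ⟨Finset.mem_univ _, x, hx, heF⟩)
  · rw [Finset.disjoint_left]
    intro e he he'
    rw [cutEdges, Finset.mem_filter] at he'
    obtain ⟨-, x, hx, y, hy, rfl⟩ := he'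
    exact hy ((Finset.mem_filter.1 he).2 y (by simp))

/-- If every cut separating `A` from `B` is large, then there are many pairwise disjoint short
paths from `A` to `B`. -/
lemma exists_disjoint_connectors (F : Finset (Sym2 V)) (A B : Finset V) (hAB : Disjoint A B)
    (β : ℝ) (L : ℕ) (hF : (F.card : ℝ) < L * (β / 2))
    (hcut : ∀ S : Finset V, A ⊆ S → Disjoint S B → β ≤ (cutEdges F S).card) :
    ∃ P : Finset (Finset (Sym2 V)), (∀ E ∈ P, E ⊆ F ∧ E.card ≤ L ∧ Connects E A B) ∧
      (P : Set (Finset (Sym2 V))).PairwiseDisjoint id ∧ β / (2 * L) ≤ P.card := by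
  have hL : (0 : ℝ) < L := by
    rcases Nat.eq_zero_or_pos L with h | h
    · rw [h, Nat.cast_zero, zero_mul] at hF
      exact absurd hF (not_lt.2 (Nat.cast_nonneg _))
    · exact_mod_cast h
  set Q : Finset (Finset (Finset (Sym2 V))) := F.powerset.powerset.filter (fun P =>
    (∀ E ∈ P, E ⊆ F ∧ E.card ≤ L ∧ Connects E A B) ∧
      (P : Set (Finset (Sym2 V))).PairwiseDisjoint id) with hQ
  have hQne : Q.Nonempty := ⟨∅, by simp [hQ]⟩
  obtain ⟨P, hPQ, hmax⟩ := Finset.exists_max_image Q Finset.card hQne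
  obtain ⟨-, hP, hdisj⟩ := Finset.mem_filter.1 hPQ
  refine ⟨P, hP, hdisj, ?_⟩
  by_contra! hlt
  set X := P.biUnion id with hX
  have hXcard : (X.card : ℝ) ≤ β / 2 := by
    have h1 : X.card ≤ P.card * L := Finset.card_biUnion_le_card_mul _ _ _ fun E hE => (hP E hE).2.1
    have h2 : (X.card : ℝ) ≤ P.card * L := by exact_mod_cast h1
    rw [lt_div_iff₀ (by positivity)] at hlt
    linarith
  have hlayer : ∀ i ≤ L, Disjoint (bfsLayer (F \ X) A i) B := by
    intro i hi
    rw [Finset.disjoint_left]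
    intro y hy hyB
    obtain ⟨E, hE, hEc, a, ha, hr⟩ := exists_reachable_of_mem_bfsLayer (F \ X) A i y hy
    have hEF : E ⊆ F := hE.trans Finset.sdiff_subset
    have hEX : Disjoint E X := Finset.disjoint_of_subset_left hE Finset.sdiff_disjoint
    have hEP : ∀ E' ∈ P, Disjoint E E' := fun E' hE' =>
      hEX.mono_right (Finset.subset_biUnion_of_mem id hE')
    have hEnot : E ∉ P := by
      intro h
      have hE0 : E = ∅ := by simpa using hEP E h
      subst hE0
      obtain ⟨w⟩ := hr
      have : a = y := by
        cases w with
        | nil => rfl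
        | cons h _ => simp at h
      subst this
      exact Finset.disjoint_left.1 hAB ha hyB
    have hins : insert E P ∈ Q := by
      have hall : ∀ E' ∈ insert E P, E' ⊆ F ∧ E'.card ≤ L ∧ Connects E' A B := by
        intro E' hE'
        rcases Finset.mem_insert.1 hE' with rfl | h
        · exact ⟨hEF, hEc.trans hi, a, ha, y, hyB, hr⟩
        · exact hP E' h
      refine Finset.mem_filter.2 ⟨?_, hall, ?_⟩
      · exact Finset.mem_powerset.2 fun E' hE' => Finset.mem_powerset.2 (hall E' hE').1
      · rw [Finset.coe_insert]
        exact hdisj.insert fun E' hE' _ => hEP E' hE'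
    have := hmax _ hins
    rw [Finset.card_insert_of_notMem hEnot] at this
    omega
  have hsub : ∀ i, A ⊆ bfsLayer (F \ X) A i := by
    intro i
    induction i with
    | zero => exact subset_rfl
    | succ i ih => exact ih.trans Finset.subset_union_left
  have hgrow : ∀ i ≤ L, i * (β / 2) ≤
      (((F \ X).filter (fun e => ∀ x ∈ e, x ∈ bfsLayer (F \ X) A i)).card : ℝ) := by
    intro i
    induction i with
    | zero => intro _; simp
    | succ i ih =>
      intro hi
      have h1 := ih (by omega)
      have h2 := hcut _ (hsub i) (hlayer i (by omega))
      have h3 : (cutEdges F (bfsLayer (F \ X) A i)).card ≤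
          (cutEdges (F \ X) (bfsLayer (F \ X) A i)).card + X.card := by
        refine (Finset.card_le_card fun e he => ?_).trans (Finset.card_union_le _ _)
        rw [cutEdges, Finset.mem_filter] at he
        by_cases heX : e ∈ X
        · exact Finset.mem_union_right _ heX
        · exact Finset.mem_union_left _
            (Finset.mem_filter.2 ⟨Finset.mem_sdiff.2 ⟨he.1, heX⟩, he.2⟩)
      have h4 := card_edges_bfsLayer_succ (F \ X) A i
      have h3' : ((cutEdges F (bfsLayer (F \ X) A i)).card : ℝ) ≤
          (cutEdges (F \ X) (bfsLayer (F \ X) A i)).card + X.card := by exact_mod_cast h3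
      have h4' : (((F \ X).filter (fun e => ∀ x ∈ e, x ∈ bfsLayer (F \ X) A i)).card : ℝ) +
          (cutEdges (F \ X) (bfsLayer (F \ X) A i)).card ≤
          ((F \ X).filter (fun e => ∀ x ∈ e, x ∈ bfsLayer (F \ X) A (i + 1))).card := by
        exact_mod_cast h4
      push_cast
      linarith
  have h1 := hgrow L le_rfl
  have h2 : (((F \ X).filter (fun e => ∀ x ∈ e, x ∈ bfsLayer (F \ X) A L)).card : ℝ) ≤ F.card := by
    exact_mod_cast Finset.card_le_card ((Finset.filter_subset _ _).trans Finset.sdiff_subset)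
  linarith

end Connectors

section Exploration

/-- The vertices of the component of `v` in the graph with edge set `s`. -/
def openComp (s : Finset (Sym2 V)) (v : V) : Finset V :=
  Finset.univ.filter (fun u => (SimpleGraph.fromEdgeSet (s : Set (Sym2 V))).Reachable v u)

lemma mem_openComp {s : Finset (Sym2 V)} {v u : V} :
    u ∈ openComp s v ↔ (SimpleGraph.fromEdgeSet (s : Set (Sym2 V))).Reachable v u := by
  simp [openComp]

lemma card_adj_filter (G : SimpleGraph V) (v : V) :
    (Finset.univ.filter (fun u => G.Adj v u)).card = (G.neighborSet v).ncard := by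
  rw [← Set.ncard_coe_finset]
  congr 1
  ext u
  simp

lemma mem_edgeFinset' {G : SimpleGraph V} {e : Sym2 V} : e ∈ edgeFinset' G ↔ e ∈ G.edgeSet := by
  simp [edgeFinset']

lemma card_bfsLayer_le {G : SimpleGraph V} {d : ℕ} (hdeg : ∀ v, (G.neighborSet v).ncard ≤ d)
    (T : Finset V) (i : ℕ) :
    (bfsLayer (edgeFinset' G) T i).card ≤ (d + 1) ^ i * T.card := by
  induction i with
  | zero => simp [bfsLayer]
  | succ i ih =>
    have h1 : (Finset.univ.filter (fun y => ∃ x ∈ bfsLayer (edgeFinset' G) T i,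
        s(x, y) ∈ edgeFinset' G)) ⊆
        (bfsLayer (edgeFinset' G) T i).biUnion
          (fun x => Finset.univ.filter (fun u => G.Adj x u)) := by
      intro y hy
      obtain ⟨-, x, hx, hxy⟩ := Finset.mem_filter.1 hy
      rw [mem_edgeFinset', SimpleGraph.mem_edgeSet] at hxy
      exact Finset.mem_biUnion.2 ⟨x, hx, by simpa using hxy⟩
    have h2 := (Finset.card_le_card h1).trans
      (Finset.card_biUnion_le_card_mul _ _ d fun x _ => (card_adj_filter G x).trans_le (hdeg x))
    rw [bfsLayer]
    calc _ ≤ _ := Finset.card_union_le _ _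
      _ ≤ (bfsLayer (edgeFinset' G) T i).card * (d + 1) := by rw [mul_add, mul_one]; omega
      _ ≤ (d + 1) ^ i * T.card * (d + 1) := Nat.mul_le_mul_right _ ih
      _ = _ := by ring

/-- In a graph without short cycles, a vertex outside a small connected set has at most one
neighbour in that set. -/
lemma unique_neighbor_of_no_short_cycle {G : SimpleGraph V} {k : ℕ}
    (hcyc : ∀ (u : V) (c : G.Walk u u), c.IsCycle → k < c.length)
    {v : V} {S : Finset V} (hconn : ∀ u ∈ S, ∃ q : G.Walk v u, ∀ x ∈ q.support, x ∈ S)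
    (hS : S.card < k) {w : V} (hw : w ∉ S) {x y : V} (hx : x ∈ S) (hy : y ∈ S)
    (hxw : G.Adj x w) (hyw : G.Adj y w) : x = y := by
  by_contra hxy
  obtain ⟨q₁, h₁⟩ := hconn x hx
  obtain ⟨q₂, h₂⟩ := hconn y hy
  set q := (q₁.reverse.append q₂).bypass with hq
  have hqS : ∀ z ∈ q.support, z ∈ S := by
    intro z hz
    have := SimpleGraph.Walk.support_bypass_subset_support _ hz
    rw [SimpleGraph.Walk.mem_support_append_iff, SimpleGraph.Walk.support_reverse,
      List.mem_reverse] at this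
    exact this.elim (h₁ z) (h₂ z)
  have hqp : q.IsPath := SimpleGraph.Walk.bypass_isPath _
  have hlen : q.length + 1 ≤ S.card := by
    rw [← SimpleGraph.Walk.length_support, ← List.toFinset_card_of_nodup hqp.support_nodup]
    exact Finset.card_le_card fun z hz => hqS z (List.mem_toFinset.1 hz)
  have hp : (q.concat hyw).IsPath := hqp.concat (fun h => hw (hqS w h)) hyw
  have hc : (SimpleGraph.Walk.cons hxw.symm (q.concat hyw)).IsCycle := by
    rw [SimpleGraph.Walk.cons_isCycle_iff]
    refine ⟨hp, fun h => ?_⟩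
    rw [SimpleGraph.Walk.edges_concat, List.concat_eq_append, List.mem_append,
      List.mem_singleton] at h
    rcases h with h | h
    · exact hw (hqS w (q.fst_mem_support_of_mem_edges h))
    · rw [Sym2.eq_iff] at h
      rcases h with ⟨h, -⟩ | ⟨-, h⟩
      · exact hw (h ▸ hy)
      · exact hxy h
  have := hcyc _ _ hc
  rw [SimpleGraph.Walk.length_cons, SimpleGraph.Walk.length_concat] at this
  omega

/-- Exploring the component of `v` edge by edge: if the open edges `O` found so far connect `S`,
and the edges `F` are still unexplored, then the component of `v` reaches size `k` with
probability at least `1 - r ^ u`, where `u` is the number of unexplored edges leaving `S`. -/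
lemma one_sub_pow_le_subsetExp_openComp {G : SimpleGraph V} {d k : ℕ}
    (hreg : ∀ v, (G.neighborSet v).ncard = d)
    (hcyc : ∀ (u : V) (c : G.Walk u u), c.IsCycle → k < c.length)
    {p r : ℝ} (hp0 : 0 ≤ p) (hp1 : p ≤ 1) (hr0 : 0 ≤ r) (hr1 : r ≤ 1)
    (hr : p * r ^ (d - 1) + (1 - p) ≤ r)
    {F₀ : Finset (Sym2 V)} (hF₀ : F₀ ⊆ edgeFinset' G) {T : Finset V}
    (hT : ∀ x y, G.Adj x y → x ∉ T → s(x, y) ∈ F₀) (v : V) (F : Finset (Sym2 V)) :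
    ∀ (O : Finset (Sym2 V)) (S : Finset V), F ⊆ F₀ → v ∈ S →
      (∀ u ∈ S, (SimpleGraph.fromEdgeSet (O : Set (Sym2 V))).Reachable v u) →
      (∀ u ∈ S, ∃ q : G.Walk v u, ∀ x ∈ q.support, x ∈ S) →
      (∀ e ∈ F₀, e ∉ F → ∃ u ∈ S, u ∈ e) →
      (∀ u ∈ S, u ∉ bfsLayer (edgeFinset' G) T (k - S.card)) →
      1 - r ^ (cutEdges F S).card ≤
        subsetExp F p (fun s => if k ≤ (openComp (O ∪ s) v).card then 1 else 0) := by
  induction F using Finset.strongInduction with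
  | H F ih =>
  intro O S hFF₀ hvS hreach hconn hexp hfar
  by_cases hk : k ≤ S.card
  · have h1 : ∀ s ⊆ F, (1 : ℝ) ≤ if k ≤ (openComp (O ∪ s) v).card then 1 else 0 := by
      intro s _
      rw [if_pos]
      exact hk.trans (Finset.card_le_card fun u hu => mem_openComp.2
        (fromEdgeSet_reachable_mono Finset.subset_union_left (hreach u hu)))
    have h2 := subsetExp_mono hp0 hp1 h1
    rw [subsetExp_const] at h2
    exact (sub_le_self _ (pow_nonneg hr0 _)).trans h2
  rw [not_le] at hk
  rcases (cutEdges F S).eq_empty_or_nonempty with hcut | ⟨e, he⟩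
  · rw [hcut, Finset.card_empty, pow_zero, sub_self]
    exact (subsetExp_const F p 0).symm.le.trans <| subsetExp_mono hp0 hp1 fun s _ => by split_ifs <;> norm_num
  obtain ⟨heF, x, hx, w, hw, rfl⟩ := Finset.mem_filter.1 he
  have hadj : ∀ {a b : V}, s(a, b) ∈ F → G.Adj a b := fun h =>
    mem_edgeFinset'.1 (hF₀ (hFF₀ h))
  set F' := F.erase s(x, w) with hF'
  have hss : F' ⊂ F := Finset.erase_ssubset heF
  have heF' : s(x, w) ∉ F' := Finset.notMem_erase _ _
  have hFins : F = insert s(x, w) F' := (Finset.insert_erase heF).symm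
  have hSw : (insert w S).card = S.card + 1 := Finset.card_insert_of_notMem hw
  obtain ⟨u, hu⟩ : ∃ u, (cutEdges F S).card = u + 1 :=
    ⟨_, (Nat.succ_pred_eq_of_pos (Finset.card_pos.2 ⟨_, he⟩)).symm⟩
  have hclosed := ih F' hss O S (hss.subset.trans hFF₀) hvS hreach hconn
    (fun f hf hfF' => by
      by_cases hfe : f = s(x, w)
      · exact ⟨x, hx, by simp [hfe]⟩
      · exact hexp f hf fun h => hfF' (Finset.mem_erase.2 ⟨hfe, h⟩)) hfar
  have hcutF' : (cutEdges F S).erase s(x, w) ⊆ cutEdges F' S := fun f hf => by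
    obtain ⟨hne, hf⟩ := Finset.mem_erase.1 hf
    obtain ⟨hfF, hf⟩ := Finset.mem_filter.1 hf
    exact Finset.mem_filter.2 ⟨Finset.mem_erase.2 ⟨hne, hfF⟩, hf⟩
  have hcard_erase : ((cutEdges F S).erase s(x, w)).card = u := by
    rw [Finset.card_erase_of_mem he, hu, Nat.add_sub_cancel]
  have hwT : w ∉ bfsLayer (edgeFinset' G) T (k - (insert w S).card) := by
    intro h
    apply hfar x hx
    rw [show k - S.card = k - (insert w S).card + 1 by omega, bfsLayer]
    refine Finset.mem_union_right _ (Finset.mem_filter.2 ⟨Finset.mem_univ _, w, h, ?_⟩)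
    rw [Sym2.eq_swap]
    exact hF₀ (hFF₀ heF)
  have hsub : ∀ i, T ⊆ bfsLayer (edgeFinset' G) T i := by
    intro i
    induction i with
    | zero => exact subset_rfl
    | succ i ih => exact ih.trans Finset.subset_union_left
  have huniq : ∀ y ∈ S, G.Adj y w → x = y := fun y hy hyw =>
    unique_neighbor_of_no_short_cycle hcyc hconn hk hw hx hy (hadj heF) hyw
  have hopen := ih F' hss (insert s(x, w) O) (insert w S) (hss.subset.trans hFF₀)
    (Finset.mem_insert_of_mem hvS)
    (fun y hy => by
      have hx' := fromEdgeSet_reachable_mono (Finset.subset_insert s(x, w) O) (hreach x hx)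
      rcases Finset.mem_insert.1 hy with rfl | hy
      · exact hx'.trans (fromEdgeSet_reachable_of_mem (Finset.mem_insert_self _ _))
      · exact fromEdgeSet_reachable_mono (Finset.subset_insert _ _) (hreach y hy))
    (fun y hy => by
      rcases Finset.mem_insert.1 hy with rfl | hy
      · obtain ⟨q, hq⟩ := hconn x hx
        refine ⟨q.concat (hadj heF), fun z hz => ?_⟩
        rw [SimpleGraph.Walk.support_concat, List.mem_append, List.mem_singleton] at hz
        exact Finset.mem_insert.2 (hz.symm.imp id (hq z))
      · obtain ⟨q, hq⟩ := hconn y hy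
        exact ⟨q, fun z hz => Finset.mem_insert_of_mem (hq z hz)⟩)
    (fun f hf hfF' => by
      by_cases hfe : f = s(x, w)
      · exact ⟨w, Finset.mem_insert_self _ _, by simp [hfe]⟩
      · obtain ⟨y, hy, hyf⟩ := hexp f hf fun h => hfF' (Finset.mem_erase.2 ⟨hfe, h⟩)
        exact ⟨y, Finset.mem_insert_of_mem hy, hyf⟩)
    (fun y hy => by
      rcases Finset.mem_insert.1 hy with rfl | hy
      · exact hwT
      · intro h
        apply hfar y hy
        rw [show k - S.card = k - (insert w S).card + 1 by omega, bfsLayer]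
        exact Finset.mem_union_left _ h)
  set N := (Finset.univ.filter (fun z => G.Adj w z)).erase x with hN
  have hNcard : N.card = d - 1 := by
    rw [hN, Finset.card_erase_of_mem (by simpa using (hadj heF).symm), card_adj_filter, hreg]
  have hNS : ∀ z ∈ N, G.Adj w z ∧ z ∉ S := by
    intro z hz
    obtain ⟨hzx, hz⟩ := Finset.mem_erase.1 hz
    have hwz : G.Adj w z := by simpa using hz
    exact ⟨hwz, fun h => hzx (huniq z h hwz.symm).symm⟩
  have hcard_open : u + (d - 1) ≤ (cutEdges F' (insert w S)).card := by
    have hinj : (N.image (fun z => s(w, z))).card = d - 1 := by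
      rw [Finset.card_image_of_injective _ (fun a b h => Sym2.congr_right.1 h), hNcard]
    rw [← hcard_erase, ← hinj, ← Finset.card_union_of_disjoint]
    · refine Finset.card_le_card (Finset.union_subset (fun f hf => ?_) fun f hf => ?_)
      · obtain ⟨hfF', y, hy, z, hz, rfl⟩ := Finset.mem_filter.1 (hcutF' hf)
        refine Finset.mem_filter.2 ⟨hfF', y, Finset.mem_insert_of_mem hy, z, ?_, rfl⟩
        rw [Finset.mem_insert, not_or]
        refine ⟨?_, hz⟩
        rintro rfl
        have := huniq y hy (hadj (hss.subset hfF'))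
        subst this
        exact heF' hfF'
      · obtain ⟨z, hz, rfl⟩ := Finset.mem_image.1 hf
        obtain ⟨hwz, hzS⟩ := hNS z hz
        refine Finset.mem_filter.2 ⟨?_, w, Finset.mem_insert_self _ _, z, ?_, rfl⟩
        · by_contra hnot
          have hne : s(w, z) ≠ s(x, w) := by
            intro h
            rw [Sym2.eq_iff] at h
            rcases h with ⟨rfl, -⟩ | ⟨-, rfl⟩
            · exact hw hx
            · exact hzS hx
          obtain ⟨y, hy, hyf⟩ := hexp s(w, z) (hT w z hwz fun h => hwT (hsub _ h))
            fun h => hnot (Finset.mem_erase.2 ⟨hne, h⟩)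
          rcases Sym2.mem_iff.1 hyf with rfl | rfl
          · exact hw hy
          · exact hzS hy
        · rw [Finset.mem_insert, not_or]
          exact ⟨hwz.ne', hzS⟩
    · rw [Finset.disjoint_left]
      intro f hf hf'
      obtain ⟨z, hz, rfl⟩ := Finset.mem_image.1 hf'
      obtain ⟨-, y, hy, y', -, h⟩ := Finset.mem_filter.1 (hcutF' hf)
      rw [Sym2.eq_iff] at h
      rcases h with ⟨rfl, -⟩ | ⟨-, rfl⟩
      · exact hw hy
      · exact (hNS _ hz).2 hy
  have hpow_closed : r ^ (cutEdges F' S).card ≤ r ^ u :=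
    pow_le_pow_of_le_one hr0 hr1 (hcard_erase ▸ Finset.card_le_card hcutF')
  have hpow_open : r ^ (cutEdges F' (insert w S)).card ≤ r ^ u * r ^ (d - 1) := by
    rw [← pow_add]
    exact pow_le_pow_of_le_one hr0 hr1 hcard_open
  rw [hu, hFins, subsetExp_insert heF']
  have hshift : subsetExp F' p (fun s => if k ≤ (openComp (O ∪ insert s(x, w) s) v).card
      then (1 : ℝ) else 0) = subsetExp F' p (fun s =>
        if k ≤ (openComp (insert s(x, w) O ∪ s) v).card then 1 else 0) :=
    subsetExp_congr fun s _ => by rw [Finset.union_insert, Finset.insert_union]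
  rw [hshift]
  have e1 := mul_le_mul_of_nonneg_left ((sub_le_sub_left hpow_open 1).trans hopen) hp0
  have e2 := mul_le_mul_of_nonneg_left ((sub_le_sub_left hpow_closed 1).trans hclosed)
    (by linarith : 0 ≤ 1 - p)
  have e3 := mul_le_mul_of_nonneg_left hr (pow_nonneg hr0 u)
  rw [pow_succ]
  linarith

end Exploration

section Concentration

/-- The vertices whose component in the graph with edge set `s` has at least `k` vertices. -/
def bigVerts (k : ℕ) (s : Finset (Sym2 V)) : Finset V :=
  Finset.univ.filter (fun v => k ≤ (openComp s v).card)

lemma mem_bigVerts {k : ℕ} {s : Finset (Sym2 V)} {v : V} :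
    v ∈ bigVerts k s ↔ k ≤ (openComp s v).card := by
  simp [bigVerts]

lemma openComp_mono {s t : Finset (Sym2 V)} (h : s ⊆ t) (v : V) : openComp s v ⊆ openComp t v :=
  fun _ hu => mem_openComp.2 (fromEdgeSet_reachable_mono h (mem_openComp.1 hu))

lemma openComp_eq_of_mem {s : Finset (Sym2 V)} {v u : V} (h : u ∈ openComp s v) :
    openComp s u = openComp s v := by
  ext w
  rw [mem_openComp] at *
  rw [mem_openComp]
  exact ⟨h.trans, h.symm.trans⟩

lemma openComp_insert_subset {s : Finset (Sym2 V)} {x y v : V} (hx : v ∉ openComp s x)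
    (hy : v ∉ openComp s y) : openComp (insert s(x, y) s) v ⊆ openComp s v := by
  intro u hu
  rw [mem_openComp] at *
  obtain ⟨w⟩ := hu
  have key : ∀ {a b : V}
      (_ : (SimpleGraph.fromEdgeSet ((insert s(x, y) s : Finset (Sym2 V)) : Set _)).Walk a b),
      (SimpleGraph.fromEdgeSet (s : Set (Sym2 V))).Reachable v a →
      (SimpleGraph.fromEdgeSet (s : Set (Sym2 V))).Reachable v b := by
    intro a b w
    induction w with
    | nil => exact id
    | cons h _ ih =>
      intro ha
      apply ih
      rw [SimpleGraph.fromEdgeSet_adj, Finset.mem_coe, Finset.mem_insert] at h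
      rcases h.1 with h | h
      · rw [Sym2.eq_iff] at h
        rcases h with ⟨rfl, -⟩ | ⟨rfl, -⟩
        · exact absurd ha.symm hx
        · exact absurd ha.symm hy
      · exact ha.trans (fromEdgeSet_reachable_of_mem h)
  exact key w (SimpleGraph.Reachable.refl v)

lemma abs_card_bigVerts_insert_sub_le (k : ℕ) (e : Sym2 V) (s : Finset (Sym2 V)) :
    |((bigVerts k (insert e s)).card : ℝ) - (bigVerts k s).card| ≤ 2 * k := by
  induction e with
  | _ x y =>
  have hmono : bigVerts k s ⊆ bigVerts k (insert s(x, y) s) := fun v hv =>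
    mem_bigVerts.2 ((mem_bigVerts.1 hv).trans
      (Finset.card_le_card (openComp_mono (Finset.subset_insert _ _) v)))
  have hsub : bigVerts k (insert s(x, y) s) ⊆ bigVerts k s ∪
      ((if (openComp s x).card < k then openComp s x else ∅) ∪
        (if (openComp s y).card < k then openComp s y else ∅)) := by
    intro v hv
    by_cases hvs : v ∈ bigVerts k s
    · exact Finset.mem_union_left _ hvs
    refine Finset.mem_union_right _ ?_
    rw [mem_bigVerts] at hv hvs
    by_cases hx : v ∈ openComp s x
    · rw [openComp_eq_of_mem hx, not_le] at hvs
      exact Finset.mem_union_left _ (by rwa [if_pos hvs])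
    by_cases hy : v ∈ openComp s y
    · rw [openComp_eq_of_mem hy, not_le] at hvs
      exact Finset.mem_union_right _ (by rwa [if_pos hvs])
    exact absurd (hv.trans (Finset.card_le_card (openComp_insert_subset hx hy))) hvs
  have hc : ∀ z, (if (openComp s z).card < k then openComp s z else ∅).card ≤ k := by
    intro z
    split_ifs with h
    · exact h.le
    · simp
  have h1 := Finset.card_le_card hmono
  have h2 : (bigVerts k (insert s(x, y) s)).card ≤ (bigVerts k s).card + 2 * k := by
    refine (Finset.card_le_card hsub).trans ((Finset.card_union_le _ _).trans ?_)
    have := (Finset.card_union_le (if (openComp s x).card < k then openComp s x else ∅)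
      (if (openComp s y).card < k then openComp s y else ∅)).trans (add_le_add (hc x) (hc y))
    omega
  have h1' : ((bigVerts k s).card : ℝ) ≤ (bigVerts k (insert s(x, y) s)).card := by
    exact_mod_cast h1
  have h2' : ((bigVerts k (insert s(x, y) s)).card : ℝ) ≤ (bigVerts k s).card + 2 * k := by
    exact_mod_cast h2
  exact abs_le.2 ⟨by linarith [(Nat.cast_nonneg k : (0 : ℝ) ≤ k)], by linarith⟩

lemma card_edgeFinset'_le {G : SimpleGraph V} {d : ℕ} (hdeg : ∀ v, (G.neighborSet v).ncard ≤ d) :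
    (edgeFinset' G).card ≤ Fintype.card V * d := by
  have h : edgeFinset' G ⊆ Finset.univ.biUnion
      (fun v => (Finset.univ.filter (fun u => G.Adj v u)).image (fun u => s(v, u))) := by
    intro e he
    induction e with
    | _ x y =>
    rw [mem_edgeFinset', SimpleGraph.mem_edgeSet] at he
    exact Finset.mem_biUnion.2 ⟨x, Finset.mem_univ _, Finset.mem_image.2 ⟨y, by simpa, rfl⟩⟩
  refine (Finset.card_le_card h).trans (Finset.card_biUnion_le_card_mul _ _ d fun v _ => ?_)
  exact Finset.card_image_le.trans ((card_adj_filter G v).trans_le (hdeg v))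

/-- In a regular graph without short cycles, supercritical percolation leaves linearly many
vertices in components of size at least `k`, outside an event of exponentially small
probability. -/
lemma subsetExp_card_bigVerts_lt_le {G : SimpleGraph V} {d k : ℕ} (hd : 1 ≤ d) (hk : 1 ≤ k)
    (hreg : ∀ v, (G.neighborSet v).ncard = d)
    (hcyc : ∀ (u : V) (c : G.Walk u u), c.IsCycle → k < c.length)
    {p r : ℝ} (hp0 : 0 ≤ p) (hp1 : p ≤ 1) (hr0 : 0 ≤ r) (hr1 : r ≤ 1)
    (hr : p * r ^ (d - 1) + (1 - p) ≤ r)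
    {F₀ : Finset (Sym2 V)} (hF₀ : F₀ ⊆ edgeFinset' G) {T : Finset V}
    (hT : ∀ x y, G.Adj x y → x ∉ T → s(x, y) ∈ F₀)
    (hfar : 2 * (bfsLayer (edgeFinset' G) T (k - 1)).card ≤ Fintype.card V) :
    subsetExp F₀ p (fun s => if ((bigVerts k s).card : ℝ) < (1 - r) / 4 * Fintype.card V
      then 1 else 0) ≤ Real.exp (-((1 - r) ^ 2 / (256 * d * k ^ 2)) * Fintype.card V) := by
  set n : ℝ := (Fintype.card V : ℝ) with hn
  have hn0 : 0 ≤ n := Nat.cast_nonneg _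
  have hd' : (1 : ℝ) ≤ d := by exact_mod_cast hd
  have hk' : (1 : ℝ) ≤ k := by exact_mod_cast hk
  have hsub : ∀ i, T ⊆ bfsLayer (edgeFinset' G) T i := by
    intro i
    induction i with
    | zero => exact subset_rfl
    | succ i ih => exact ih.trans Finset.subset_union_left
  have hvertex : ∀ v ∉ bfsLayer (edgeFinset' G) T (k - 1), 1 - r ≤
      subsetExp F₀ p (fun s => if k ≤ (openComp s v).card then 1 else 0) := by
    intro v hv
    have h := one_sub_pow_le_subsetExp_openComp hreg hcyc hp0 hp1 hr0 hr1 hr hF₀ hT v F₀ ∅ {v}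
      subset_rfl (by simp) (fun u hu => by rw [Finset.mem_singleton.1 hu])
      (fun u hu => by
        rw [Finset.mem_singleton.1 hu]
        exact ⟨SimpleGraph.Walk.nil, by simp⟩)
      (fun e he he' => absurd he he') (fun u hu => by
        rw [Finset.mem_singleton.1 hu, Finset.card_singleton]; exact hv)
    simp only [Finset.empty_union] at h
    refine le_trans ?_ h
    have hpos : 1 ≤ (cutEdges F₀ {v}).card := by
      have : 0 < (Finset.univ.filter (fun u => G.Adj v u)).card := by
        rw [card_adj_filter, hreg]; exact hd
      obtain ⟨z, hz⟩ := Finset.card_pos.1 this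
      have hvz : G.Adj v z := by simpa using hz
      refine Finset.card_pos.2 ⟨s(v, z), Finset.mem_filter.2
        ⟨hT v z hvz fun h => hv (hsub _ h), v, by simp, z, by simpa using hvz.ne', rfl⟩⟩
    have := pow_le_pow_of_le_one hr0 hr1 hpos
    rw [pow_one] at this
    linarith
  have hmean : (1 - r) / 2 * n ≤ subsetExp F₀ p (fun s => ((bigVerts k s).card : ℝ)) := by
    have h1 : subsetExp F₀ p (fun s => ((bigVerts k s).card : ℝ)) =
        ∑ v : V, subsetExp F₀ p (fun s => if k ≤ (openComp s v).card then 1 else 0) := by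
      rw [← subsetExp_sum]
      exact subsetExp_congr fun s _ => by simp [bigVerts]
    have h2 : ∑ v ∈ Finset.univ \ bfsLayer (edgeFinset' G) T (k - 1), (1 - r) ≤
        ∑ v : V, subsetExp F₀ p (fun s => if k ≤ (openComp s v).card then 1 else 0) := by
      refine (Finset.sum_le_sum fun v hv => hvertex v (Finset.mem_sdiff.1 hv).2).trans ?_
      refine Finset.sum_le_sum_of_subset_of_nonneg (Finset.subset_univ _) fun v _ _ => ?_
      exact (subsetExp_const F₀ p 0).symm.le.trans <| subsetExp_mono hp0 hp1 fun s _ => by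
        split_ifs <;> norm_num
    rw [Finset.sum_const, nsmul_eq_mul,
      Finset.cast_card_sdiff (Finset.subset_univ _), Finset.card_univ] at h2
    have h3 : 2 * ((bfsLayer (edgeFinset' G) T (k - 1)).card : ℝ) ≤ n := by rw [hn]; exact_mod_cast hfar
    rw [h1]
    refine le_trans ?_ h2
    nlinarith
  set l : ℝ := (1 - r) / (32 * d * k ^ 2) with hl
  have hl0 : 0 ≤ l := div_nonneg (by linarith) (by positivity)
  have hlk : l * (2 * k) ≤ 1 := by
    rw [hl, div_mul_eq_mul_div, div_le_one (by positivity)]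
    have : (1 : ℝ) * k ≤ d * k ^ 2 := by
      rw [pow_two, ← mul_assoc]
      exact mul_le_mul_of_nonneg_right (by nlinarith) (by linarith)
    nlinarith
  have hconc := subsetExp_exp_neg_le hp0 hp1 hlk F₀ (fun s => l * ((bigVerts k s).card : ℝ))
    (fun e s => by
      rw [← mul_sub, abs_mul, abs_of_nonneg hl0]
      exact mul_le_mul_of_nonneg_left (abs_card_bigVerts_insert_sub_le k e s) hl0)
  rw [subsetExp_const_mul] at hconc
  have hFcard : (F₀.card : ℝ) ≤ n * d := by
    rw [hn]
    exact_mod_cast (Finset.card_le_card hF₀).trans (card_edgeFinset'_le fun v => (hreg v).le)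
  have hmarkov : subsetExp F₀ p (fun s => if ((bigVerts k s).card : ℝ) < (1 - r) / 4 * n
      then 1 else 0) ≤ Real.exp (l * ((1 - r) / 4 * n)) *
        subsetExp F₀ p (fun s => Real.exp (-(l * ((bigVerts k s).card : ℝ)))) := by
    rw [← subsetExp_const_mul]
    refine subsetExp_mono hp0 hp1 fun s _ => ?_
    rw [← Real.exp_add]
    split_ifs with h
    · rw [Real.one_le_exp_iff]
      have := mul_le_mul_of_nonneg_left h.le hl0
      linarith
    · positivity
  refine hmarkov.trans ((mul_le_mul_of_nonneg_left hconc (Real.exp_pos _).le).trans ?_)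
  rw [← Real.exp_add, Real.exp_le_exp]
  have h1 := mul_le_mul_of_nonneg_left hmean hl0
  have h2 := mul_le_mul_of_nonneg_right hFcard (sq_nonneg (l * (2 * k)))
  have h3 : n * d * (l * (2 * k)) ^ 2 = l * ((1 - r) / 8 * n) := by
    rw [hl]; field_simp; ring
  have h4 : (1 - r) ^ 2 / (256 * d * k ^ 2) * n = l * ((1 - r) / 8 * n) := by
    rw [hl]; field_simp; ring
  linarith

end Concentration

section Sprinkling

lemma exists_subset_sum_between {ι : Type*} [DecidableEq ι] (T : Finset ι) (w : ι → ℝ) {m t : ℝ}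
    (hw : ∀ i ∈ T, w i ≤ m) (hm : 0 ≤ m) (ht0 : 0 ≤ t) (ht : t ≤ ∑ i ∈ T, w i) :
    ∃ D ⊆ T, t ≤ ∑ i ∈ D, w i ∧ ∑ i ∈ D, w i ≤ t + m := by
  induction T using Finset.induction_on with
  | empty => exact ⟨∅, subset_rfl, ht, by simp only [Finset.sum_empty]; linarith⟩
  | insert a T ha ih =>
    by_cases h : t ≤ ∑ i ∈ T, w i
    · obtain ⟨D, hD, h1⟩ := ih (fun i hi => hw i (Finset.mem_insert_of_mem hi)) h
      exact ⟨D, hD.trans (Finset.subset_insert _ _), h1⟩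
    · refine ⟨insert a T, subset_rfl, ht, ?_⟩
      rw [Finset.sum_insert ha]
      linarith [hw a (Finset.mem_insert_self _ _)]

/-- If all components are small, then `U` splits into two large parts lying in different
components. -/
lemma exists_balanced_split (s : Finset (Sym2 V)) (U : Finset V) {a : ℝ} (ha : 0 ≤ a)
    (hU : 3 * a ≤ U.card) (hsmall : ∀ v, ((openComp s v).card : ℝ) ≤ a) :
    ∃ A ⊆ U, a ≤ A.card ∧ a ≤ (U \ A).card ∧
      ∀ x ∈ A, ∀ y ∈ U, (SimpleGraph.fromEdgeSet (s : Set (Sym2 V))).Reachable x y → y ∈ A := by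
  have hsum : ∀ D : Finset (Finset V),
      ((U.filter (fun u => openComp s u ∈ D)).card : ℝ) =
        ∑ c ∈ D, ((U.filter (fun u => openComp s u = c)).card : ℝ) := by
    intro D
    have hmaps : Set.MapsTo (openComp s) (U.filter (fun u => openComp s u ∈ D)) D := fun u hu =>
      (Finset.mem_filter.1 (Finset.mem_coe.1 hu)).2
    rw [Finset.card_eq_sum_card_fiberwise hmaps]
    push_cast
    refine Finset.sum_congr rfl fun c hc => ?_
    congr 2
    ext u
    simp only [Finset.mem_filter]
    exact ⟨fun h => ⟨h.1.1, h.2⟩, fun h => ⟨⟨h.1, h.2 ▸ hc⟩, h.2⟩⟩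
  have hall : U.filter (fun u => openComp s u ∈ U.image (openComp s)) = U :=
    Finset.filter_true_of_mem fun u hu => Finset.mem_image_of_mem _ hu
  obtain ⟨D, -, hD1, hD2⟩ := exists_subset_sum_between (U.image (openComp s))
    (fun c => ((U.filter (fun u => openComp s u = c)).card : ℝ)) (m := a) (t := a)
    (fun c hc => by
      obtain ⟨v, -, rfl⟩ := Finset.mem_image.1 hc
      refine le_trans ?_ (hsmall v)
      refine Nat.cast_le.2 (Finset.card_le_card fun u hu => ?_)
      rw [← (Finset.mem_filter.1 hu).2]
      exact mem_openComp.2 (SimpleGraph.Reachable.refl u)) ha ha (by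
      rw [← hsum, hall]; linarith)
  rw [← hsum] at hD1 hD2
  refine ⟨U.filter (fun u => openComp s u ∈ D), Finset.filter_subset _ _, hD1, ?_, ?_⟩
  · rw [Finset.cast_card_sdiff (Finset.filter_subset _ _)]
    linarith
  · intro x hx y hy hxy
    refine Finset.mem_filter.2 ⟨hy, ?_⟩
    rw [openComp_eq_of_mem (mem_openComp.2 hxy)]
    exact (Finset.mem_filter.1 hx).2

/-- The components with at least `k` vertices. -/
def bigComps (k : ℕ) (s : Finset (Sym2 V)) : Finset (Finset V) :=
  (bigVerts k s).image (openComp s)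

lemma card_bigComps_mul_le (k : ℕ) (s : Finset (Sym2 V)) :
    (bigComps k s).card * k ≤ Fintype.card V := by
  have hdisj : ((bigComps k s : Finset (Finset V)) : Set (Finset V)).PairwiseDisjoint id := by
    intro c hc c' hc' hne
    obtain ⟨v, -, rfl⟩ := Finset.mem_image.1 (Finset.mem_coe.1 hc)
    obtain ⟨v', -, rfl⟩ := Finset.mem_image.1 (Finset.mem_coe.1 hc')
    refine Finset.disjoint_left.2 fun u hu hu' => hne ?_
    rw [← openComp_eq_of_mem hu, ← openComp_eq_of_mem hu']
  calc (bigComps k s).card * k ≤ ∑ c ∈ bigComps k s, c.card := by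
        rw [← smul_eq_mul]
        refine Finset.card_nsmul_le_sum _ _ _ fun c hc => ?_
        obtain ⟨v, hv, rfl⟩ := Finset.mem_image.1 hc
        exact mem_bigVerts.1 hv
    _ = ((bigComps k s).biUnion id).card := (Finset.card_biUnion hdisj).symm
    _ ≤ _ := Finset.card_le_univ _

/-- Sprinkling: if linearly many vertices lie in large components of `s`, and large sets are joined
by many short disjoint paths of `F`, then adding a random subset of `F` creates a giant
component outside an event of small probability. -/
lemma subsetExp_no_giant_le {F s : Finset (Sym2 V)} {p a N : ℝ} {k L : ℕ} (hp0 : 0 ≤ p)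
    (hp1 : p ≤ 1) (ha : 0 ≤ a) (hU : 3 * a ≤ (bigVerts k s).card) {κ : ℝ} (hκ : 0 ≤ κ)
    (hpL : 1 - p ^ L ≤ Real.exp (-κ))
    (hconn : ∀ A B : Finset V, Disjoint A B → a ≤ A.card → a ≤ B.card →
      ∃ P : Finset (Finset (Sym2 V)), (∀ E ∈ P, E ⊆ F ∧ E.card ≤ L ∧ Connects E A B) ∧
        (P : Set (Finset (Sym2 V))).PairwiseDisjoint id ∧ N ≤ P.card) :
    subsetExp F p (fun t => if ∃ v, a ≤ ((openComp (s ∪ t) v).card : ℝ) then 0 else 1) ≤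
      2 ^ (bigComps k s).card * Real.exp (-κ * N) := by
  set U := bigVerts k s with hUdef
  let part : Finset (Finset V) → Finset V := fun D => U.filter (fun u => openComp s u ∈ D)
  let bad : Finset (Finset V) → Finset (Sym2 V) → Prop := fun D t =>
    a ≤ (part D).card ∧ a ≤ (U \ part D).card ∧ ¬ Connects t (part D) (U \ part D)
  have hbad : ∀ D, subsetExp F p (fun t => if bad D t then 1 else 0) ≤ Real.exp (-κ * N) := by
    intro D
    by_cases hD : a ≤ (part D).card ∧ a ≤ (U \ part D).card
    · obtain ⟨P, hP, hdisj, hN⟩ := hconn (part D) (U \ part D) Finset.disjoint_sdiff hD.1 hD.2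
      have hmain := subsetExp_no_member_subset_le hp0 hp1 L P F
        (fun E hE => (hP E hE).1) (fun E hE => (hP E hE).2.1) hdisj
      refine (subsetExp_mono hp0 hp1 fun t _ => ?_).trans (hmain.trans ?_)
      · by_cases hb : bad D t
        · rw [if_pos hb, if_pos]
          intro E hE hEt
          obtain ⟨x, hx, y, hy, hxy⟩ := (hP E hE).2.2
          exact hb.2.2 ⟨x, hx, y, hy, fromEdgeSet_reachable_mono hEt hxy⟩
        · rw [if_neg hb]
          split_ifs <;> norm_num
      · calc (1 - p ^ L) ^ P.card ≤ Real.exp (-κ) ^ P.card :=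
              pow_le_pow_left₀ (by linarith [pow_le_one₀ hp0 hp1 (n := L)]) hpL _
          _ = Real.exp (P.card * -κ) := (Real.exp_nat_mul _ _).symm
          _ ≤ Real.exp (-κ * N) := Real.exp_le_exp.2 (by nlinarith)
    · refine le_trans (subsetExp_mono (g := fun _ => 0) hp0 hp1 fun t _ => ?_)
        ((subsetExp_const F p 0).le.trans (Real.exp_pos _).le)
      rw [if_neg fun h => hD ⟨h.1, h.2.1⟩]
  have hcover : ∀ t ⊆ F, (if ∃ v, a ≤ ((openComp (s ∪ t) v).card : ℝ) then (0 : ℝ) else 1) ≤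
      ∑ D ∈ (bigComps k s).powerset, if bad D t then (1 : ℝ) else 0 := by
    intro t _
    have hnonneg : ∀ D ∈ (bigComps k s).powerset, (0 : ℝ) ≤ if bad D t then (1 : ℝ) else 0 :=
      fun D _ => by split_ifs <;> norm_num
    split_ifs with h
    · exact Finset.sum_nonneg hnonneg
    · push Not at h
      obtain ⟨A, hAU, hA1, hA2, hsat⟩ := exists_balanced_split (s ∪ t) U ha hU fun v => (h v).le
      have hpart : part (A.image (openComp s)) = A := by
        ext u
        simp only [part, Finset.mem_filter, Finset.mem_image]
        constructor
        · rintro ⟨hu, x, hx, hxu⟩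
          have hux : u ∈ openComp s x := by
            rw [hxu]; exact mem_openComp.2 (SimpleGraph.Reachable.refl u)
          exact hsat x hx u hu
            (fromEdgeSet_reachable_mono Finset.subset_union_left (mem_openComp.1 hux))
        · exact fun hu => ⟨hAU hu, u, hu, rfl⟩
      have hb : bad (A.image (openComp s)) t := by
        simp only [bad, hpart]
        refine ⟨hA1, hA2, ?_⟩
        rintro ⟨x, hx, y, hy, hxy⟩
        obtain ⟨hyU, hyA⟩ := Finset.mem_sdiff.1 hy
        exact hyA (hsat x hx y hyU (fromEdgeSet_reachable_mono Finset.subset_union_right hxy))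
      have hmem : A.image (openComp s) ∈ (bigComps k s).powerset :=
        Finset.mem_powerset.2 (Finset.image_subset_image hAU)
      refine le_trans ?_ (Finset.single_le_sum hnonneg hmem)
      rw [if_pos hb]
  refine (subsetExp_mono hp0 hp1 hcover).trans ?_
  rw [subsetExp_sum]
  refine (Finset.sum_le_sum fun D _ => hbad D).trans ?_
  rw [Finset.sum_const, Finset.card_powerset, nsmul_eq_mul]
  push_cast
  exact le_rfl

end Sprinkling

section Expanders

lemma cutCard_compl (G : SimpleGraph V) (S : Finset V) : cutCard G Sᶜ = cutCard G S := by
  unfold cutCard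
  congr 1
  ext e
  simp only [Finset.mem_filter, Finset.mem_compl, not_not]
  refine and_congr_right fun _ => ⟨?_, ?_⟩
  · rintro ⟨x, hx, y, hy, rfl⟩
    exact ⟨y, hy, x, hx, Sym2.eq_swap⟩
  · rintro ⟨x, hx, y, hy, rfl⟩
    exact ⟨y, hy, x, hx, Sym2.eq_swap⟩

/-- In an expander every cut separating two large sets is large. -/
lemma IsExpander.mul_le_cutCard {G : SimpleGraph V} {b : ℝ} {d : ℕ} (hG : IsExpander G b d)
    (hb : 0 ≤ b) {a : ℝ} {A B S : Finset V} (hA : a ≤ A.card) (hB : a ≤ B.card) (hAS : A ⊆ S)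
    (hSB : Disjoint S B) : b * a ≤ cutCard G S := by
  rcases le_total (S.card : ℝ) (Fintype.card V / 2) with h | h
  · refine le_trans (mul_le_mul_of_nonneg_left (hA.trans ?_) hb) (hG.2 S h)
    exact_mod_cast Finset.card_le_card hAS
  · rw [← cutCard_compl]
    have hc : ((Sᶜ.card : ℕ) : ℝ) = Fintype.card V - S.card := by
      rw [Finset.card_compl, Nat.cast_sub (Finset.card_le_univ S)]
    refine le_trans (mul_le_mul_of_nonneg_left (hB.trans ?_) hb) (hG.2 Sᶜ (by linarith))
    refine Nat.cast_le.2 (Finset.card_le_card fun x hx => Finset.mem_compl.2 fun hxS => ?_)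
    exact Finset.disjoint_left.1 hSB hxS hx

/-- The endpoints of the edges in `M`. -/
def coveredVerts (M : Finset (Sym2 V)) : Finset V := Finset.univ.filter (fun v => ∃ e ∈ M, v ∈ e)

lemma card_coveredVerts_le (M : Finset (Sym2 V)) : (coveredVerts M).card ≤ M.card * 2 := by
  have h : coveredVerts M ⊆ M.biUnion (fun e => e.toFinset) := by
    intro v hv
    obtain ⟨e, he, hve⟩ := (Finset.mem_filter.1 hv).2
    exact Finset.mem_biUnion.2 ⟨e, he, Sym2.mem_toFinset.2 hve⟩
  refine (Finset.card_le_card h).trans (Finset.card_biUnion_le_card_mul _ _ 2 fun e _ => ?_)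
  rw [Sym2.card_toFinset]
  split_ifs <;> norm_num

/-- A regular graph contains matchings of any prescribed size up to a constant fraction of the
number of vertices. -/
lemma exists_matching_card_eq {G : SimpleGraph V} {d : ℕ} (hd : 1 ≤ d)
    (hreg : ∀ v, (G.neighborSet v).ncard = d) (m : ℕ)
    (hm : 2 * (d + 1) * (m - 1) < Fintype.card V) :
    ∃ M : Finset (Sym2 V), (M : Set (Sym2 V)) ⊆ G.edgeSet ∧
      (∀ e ∈ M, ∀ f ∈ M, e ≠ f → ∀ v : V, ¬(v ∈ e ∧ v ∈ f)) ∧ M.card = m := by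
  induction m with
  | zero => exact ⟨∅, by simp, by simp, rfl⟩
  | succ m ih =>
    rw [Nat.add_sub_cancel] at hm
    obtain ⟨M, hME, hMd, hMc⟩ := ih
      (lt_of_le_of_lt (Nat.mul_le_mul_left _ (Nat.sub_le m 1)) hm)
    set X := bfsLayer (edgeFinset' G) (coveredVerts M) 1 with hX
    have hXc : X.card < (Finset.univ : Finset V).card := by
      refine lt_of_le_of_lt (card_bfsLayer_le (fun v => (hreg v).le) _ 1) ?_
      rw [Finset.card_univ, pow_one]
      refine lt_of_le_of_lt (Nat.mul_le_mul_left _ (card_coveredVerts_le M)) ?_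
      rw [hMc]
      linarith
    obtain ⟨v, -, hv⟩ := Finset.exists_mem_notMem_of_card_lt_card hXc
    have hpos : 0 < (Finset.univ.filter (fun u => G.Adj v u)).card := by
      rw [card_adj_filter, hreg]; exact hd
    obtain ⟨w, hw⟩ := Finset.card_pos.1 hpos
    have hvw : G.Adj v w := by simpa using hw
    have hvM : v ∉ coveredVerts M := fun h => hv (Finset.mem_union_left _ h)
    have hwM : w ∉ coveredVerts M := fun h => hv <| Finset.mem_union_right _ <|
      Finset.mem_filter.2 ⟨Finset.mem_univ _, w, h, mem_edgeFinset'.2 hvw.symm⟩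
    have hfree : ∀ f ∈ M, ∀ u, ¬(u ∈ s(v, w) ∧ u ∈ f) := by
      rintro f hf u ⟨hu, huf⟩
      have hcov : u ∈ coveredVerts M := Finset.mem_filter.2 ⟨Finset.mem_univ _, f, hf, huf⟩
      rcases Sym2.mem_iff.1 hu with rfl | rfl
      · exact hvM hcov
      · exact hwM hcov
    have hnot : s(v, w) ∉ M := fun h => hfree _ h v ⟨by simp, by simp⟩
    refine ⟨insert s(v, w) M, ?_, ?_, ?_⟩
    · rw [Finset.coe_insert]
      exact Set.insert_subset hvw hME
    · intro e he f hf hef u hu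
      rcases Finset.mem_insert.1 he with rfl | he <;> rcases Finset.mem_insert.1 hf with rfl | hf
      · exact hef rfl
      · exact hfree f hf u hu
      · exact hfree e he u hu.symm
      · exact hMd e he f hf hef u hu
    · rw [Finset.card_insert_of_notMem hnot, hMc]

end Expanders


section Giant

lemma survival_inequality {m : ℕ} (hm : 1 ≤ m) {p : ℝ} (hp : 1 / (m : ℝ) < p) (hp1 : p < 1) :
    p * (1 - (p - 1 / m)) ^ m + (1 - p) ≤ 1 - (p - 1 / m) := by
  have hm0 : (0 : ℝ) < m := by exact_mod_cast hm
  set q := p - 1 / (m : ℝ) with hq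
  have hq0 : 0 < q := by linarith
  have hminv : 0 < 1 / (m : ℝ) := by positivity
  have hq1 : q < 1 := by linarith
  have hmq : m * q = m * p - 1 := by rw [hq]; field_simp
  have hbern : 1 + m * q ≤ (1 + q) ^ m := one_add_mul_le_pow (by linarith) m
  have hprod : (1 - q) ^ m * (1 + q) ^ m ≤ 1 := by
    rw [← mul_pow]
    exact pow_le_one₀ (by nlinarith) (by nlinarith)
  have hpow : (1 - q) ^ m * (1 + m * q) ≤ 1 :=
    (mul_le_mul_of_nonneg_left hbern (pow_nonneg (by linarith) m)).trans hprod
  have hmp : 0 < m * p := by nlinarith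
  have hx : (1 - q) ^ m * (m * p) ≤ 1 := by
    have : 1 + m * q = m * p := by linarith
    rwa [this] at hpow
  have : p * (1 - q) ^ m ≤ 1 / m := by
    rw [le_div_iff₀ hm0]
    linarith
  linarith

lemma percProb_exists_compVerts_eq (H : SimpleGraph V) (p a : ℝ) :
    percProb H p (fun H => ∃ c : H.ConnectedComponent, a ≤ ((compVerts H c).card : ℝ)) =
      1 - subsetExp (edgeFinset' H) p
        (fun s => if ∃ v, a ≤ ((openComp s v).card : ℝ) then 0 else 1) := by
  have hcomp : ∀ (s : Finset (Sym2 V)) v,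
      compVerts (SimpleGraph.fromEdgeSet (s : Set (Sym2 V)))
        ((SimpleGraph.fromEdgeSet (s : Set (Sym2 V))).connectedComponentMk v) = openComp s v := by
    intro s v
    ext u
    rw [mem_openComp, compVerts, Finset.mem_filter, SimpleGraph.ConnectedComponent.eq]
    exact ⟨fun h => h.2.symm, fun h => ⟨Finset.mem_univ _, h.symm⟩⟩
  rw [eq_sub_iff_add_eq]
  refine Eq.trans ?_ (subsetExp_const (edgeFinset' H) p 1)
  change subsetExp (edgeFinset' H) p _ + _ = _
  rw [← subsetExp_add]
  refine subsetExp_congr fun s _ => ?_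
  by_cases h : ∃ v, a ≤ ((openComp s v).card : ℝ)
  · rw [if_pos h, if_pos, add_zero]
    obtain ⟨v, hv⟩ := h
    exact ⟨_, (hcomp s v).symm ▸ hv⟩
  · rw [if_neg h, if_neg, zero_add]
    rintro ⟨c, hc⟩
    induction c using SimpleGraph.ConnectedComponent.ind with
    | h v => exact h ⟨v, hcomp s v ▸ hc⟩

lemma two_pow_card_bigComps_le {k : ℕ} (hk : 1 ≤ k) (s : Finset (Sym2 V)) :
    (2 : ℝ) ^ (bigComps k s).card ≤ Real.exp (Real.log 2 / k * Fintype.card V) := by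
  have hk0 : (0 : ℝ) < k := by exact_mod_cast hk
  rw [← Real.exp_log (pow_pos (two_pos : (0 : ℝ) < 2) _), Real.log_pow]
  refine Real.exp_le_exp.2 ?_
  have h : ((bigComps k s).card : ℝ) * k ≤ Fintype.card V := by
    exact_mod_cast card_bigComps_mul_le k s
  have hlog : 0 ≤ Real.log 2 := Real.log_nonneg one_le_two
  rw [div_mul_eq_mul_div, le_div_iff₀ hk0]
  nlinarith

/-- Two-round exposure: the giant component fails to appear only if the first round leaves few
vertices in large components or the second round fails to connect two large sets. -/
lemma subsetExp_sprinkle_no_giant_le {F : Finset (Sym2 V)} {p₁ p₂ a N κ : ℝ} {k L : ℕ}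
    (h₁0 : 0 ≤ p₁) (h₁1 : p₁ ≤ 1) (h₂0 : 0 ≤ p₂) (h₂1 : p₂ ≤ 1) (ha : 0 ≤ a) (hk : 1 ≤ k)
    (hκ : 0 ≤ κ) (hpL : 1 - p₂ ^ L ≤ Real.exp (-κ))
    (hconn : ∀ A B : Finset V, Disjoint A B → a ≤ A.card → a ≤ B.card →
      ∃ P : Finset (Finset (Sym2 V)), (∀ E ∈ P, E ⊆ F ∧ E.card ≤ L ∧ Connects E A B) ∧
        (P : Set (Finset (Sym2 V))).PairwiseDisjoint id ∧ N ≤ P.card) :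
    subsetExp F (1 - (1 - p₁) * (1 - p₂))
        (fun s => if ∃ v, a ≤ ((openComp s v).card : ℝ) then 0 else 1) ≤
      subsetExp F p₁ (fun s => if ((bigVerts k s).card : ℝ) < 3 * a then 1 else 0) +
        Real.exp (Real.log 2 / k * Fintype.card V - κ * N) := by
  rw [subsetExp_sprinkle, ← subsetExp_const F p₁ (Real.exp _), ← subsetExp_add]
  refine subsetExp_mono h₁0 h₁1 fun s _ => ?_
  by_cases h : ((bigVerts k s).card : ℝ) < 3 * a
  · rw [if_pos h]
    have hle : subsetExp F p₂
        (fun t => if ∃ v, a ≤ ((openComp (s ∪ t) v).card : ℝ) then 0 else 1) ≤ 1 := by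
      refine le_of_le_of_eq (subsetExp_mono h₂0 h₂1 fun t _ => ?_) (subsetExp_const F p₂ 1)
      split_ifs <;> norm_num
    exact hle.trans (le_add_of_nonneg_right (Real.exp_pos _).le)
  · rw [if_neg h, zero_add]
    refine (subsetExp_no_giant_le h₂0 h₂1 ha (not_lt.1 h) hκ hpL hconn).trans ?_
    rw [sub_eq_add_neg, Real.exp_add, ← neg_mul]
    exact mul_le_mul_of_nonneg_right (two_pow_card_bigComps_le hk s) (Real.exp_pos _).le

lemma edgeFinset'_deleteEdges (G : SimpleGraph V) (M : Finset (Sym2 V)) :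
    edgeFinset' (G.deleteEdges (M : Set (Sym2 V))) = edgeFinset' G \ M := by
  ext e
  simp [edgeFinset', SimpleGraph.edgeSet_deleteEdges]

/-- Deleting few edges from a regular expander of large girth does not destroy the giant
component of supercritical percolation. -/
lemma le_percProb_deleteEdges_giant {G : SimpleGraph V} {b α : ℝ} {d k L : ℕ}
    (hG : IsRegularExpander G b d) (hb : 0 < b) (hd : 1 ≤ d) (hk : 1 ≤ k)
    (hV : 0 < Fintype.card V)
    (hcyc : ∀ u (c : G.Walk u u), c.IsCycle → k < c.length)
    {p₁ p₂ κ : ℝ} (h₁0 : 0 ≤ p₁) (h₁1 : p₁ ≤ 1) (h₂0 : 0 ≤ p₂) (h₂1 : p₂ ≤ 1)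
    (hα0 : 0 < α) (hα1 : 12 * α ≤ 1)
    (hα : p₁ * (1 - 12 * α) ^ (d - 1) + (1 - p₁) ≤ 1 - 12 * α)
    (hκ : 0 ≤ κ) (hpL : 1 - p₂ ^ L ≤ Real.exp (-κ)) (hL : 4 * d < L * (b * α))
    {M : Finset (Sym2 V)} (hM1 : (M.card : ℝ) ≤ b * α / 2 * Fintype.card V)
    (hM2 : 4 * (d + 1) ^ k * (M.card : ℝ) ≤ Fintype.card V) :
    1 - (Real.exp (-((12 * α) ^ 2 / (256 * d * k ^ 2)) * Fintype.card V) +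
        Real.exp (Real.log 2 / k * Fintype.card V -
          κ * (b * α / (4 * L) * Fintype.card V))) ≤
      percProb (G.deleteEdges (M : Set (Sym2 V))) (1 - (1 - p₁) * (1 - p₂)) (fun H =>
        ∃ c : H.ConnectedComponent, α * Fintype.card V ≤ ((compVerts H c).card : ℝ)) := by
  obtain ⟨hexp, hreg⟩ := hG
  rw [percProb_exists_compVerts_eq, edgeFinset'_deleteEdges]
  refine sub_le_sub_left ?_ 1
  set n : ℝ := (Fintype.card V : ℝ) with hn
  have hn0 : 0 < n := by rw [hn]; exact_mod_cast hV
  have hsub : edgeFinset' G \ M ⊆ edgeFinset' G := Finset.sdiff_subset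
  have hT : ∀ x y, G.Adj x y → x ∉ coveredVerts M → s(x, y) ∈ edgeFinset' G \ M := by
    intro x y hxy hx
    refine Finset.mem_sdiff.2 ⟨mem_edgeFinset'.2 hxy, fun h => hx ?_⟩
    exact Finset.mem_filter.2 ⟨Finset.mem_univ _, _, h, by simp⟩
  have hfar : 2 * (bfsLayer (edgeFinset' G) (coveredVerts M) (k - 1)).card ≤
      Fintype.card V := by
    have h1 : (bfsLayer (edgeFinset' G) (coveredVerts M) (k - 1)).card ≤
        (d + 1) ^ k * (M.card * 2) :=
      (card_bfsLayer_le hexp.1 _ _).trans (Nat.mul_le_mul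
        (Nat.pow_le_pow_right (Nat.succ_pos d) (Nat.sub_le k 1)) (card_coveredVerts_le M))
    have h2 : 4 * (d + 1) ^ k * M.card ≤ Fintype.card V := by
      rw [hn] at hM2; exact_mod_cast hM2
    nlinarith
  have hfirst := subsetExp_card_bigVerts_lt_le hd hk hreg hcyc h₁0 h₁1
    (by linarith : 0 ≤ 1 - 12 * α) (by linarith) hα hsub hT hfar
  have hcard : ((edgeFinset' G \ M).card : ℝ) < L * (b * α / 2 * n / 2) := by
    have h1 : ((edgeFinset' G \ M).card : ℝ) ≤ n * d := by
      rw [hn]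
      exact_mod_cast (Finset.card_le_card hsub).trans (card_edgeFinset'_le hexp.1)
    nlinarith [mul_lt_mul_of_pos_right hL hn0]
  have hconn : ∀ A B : Finset V, Disjoint A B → α * n ≤ A.card → α * n ≤ B.card →
      ∃ P : Finset (Finset (Sym2 V)),
        (∀ E ∈ P, E ⊆ edgeFinset' G \ M ∧ E.card ≤ L ∧ Connects E A B) ∧
        (P : Set (Finset (Sym2 V))).PairwiseDisjoint id ∧
        b * α / (4 * L) * n ≤ P.card := by
    intro A B hAB hA hB
    obtain ⟨P, hP, hdisj, hcardP⟩ := exists_disjoint_connectors (edgeFinset' G \ M) A B hAB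
      (b * α / 2 * n) L hcard fun S hAS hSB => by
        have hcut := hexp.mul_le_cutCard hb.le hA hB hAS hSB
        have hle : cutCard G S ≤ (cutEdges (edgeFinset' G \ M) S).card + M.card := by
          refine (Finset.card_le_card fun e he => ?_).trans (Finset.card_union_le _ _)
          obtain ⟨heG, he⟩ := Finset.mem_filter.1 he
          by_cases heM : e ∈ M
          · exact Finset.mem_union_right _ heM
          · exact Finset.mem_union_left _
              (Finset.mem_filter.2 ⟨Finset.mem_sdiff.2 ⟨heG, heM⟩, he⟩)
        have hle' : (cutCard G S : ℝ) ≤ (cutEdges (edgeFinset' G \ M) S).card + M.card := by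
          exact_mod_cast hle
        linarith
    refine ⟨P, hP, hdisj, le_of_eq_of_le ?_ hcardP⟩
    rw [div_mul_eq_mul_div, div_mul_eq_mul_div, div_div]
    ring
  refine (subsetExp_sprinkle_no_giant_le h₁0 h₁1 h₂0 h₂1 (by positivity) hk hκ hpL hconn).trans ?_
  refine add_le_add_left (le_trans (subsetExp_mono h₁0 h₁1 fun s _ => ?_) (hfirst.trans ?_)) _
  · rw [show (1 - (1 - 12 * α)) / 4 * (Fintype.card V : ℝ) = 3 * (α * n) by rw [← hn]; ring]
  · rw [sub_sub_cancel]

lemma percProb_nonneg (G : SimpleGraph V) {p : ℝ} (hp0 : 0 ≤ p) (hp1 : p ≤ 1)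
    (P : SimpleGraph V → Prop) : 0 ≤ percProb G p P := by
  refine Finset.sum_nonneg fun s _ => mul_nonneg (mul_nonneg (pow_nonneg hp0 _)
    (pow_nonneg (by linarith) _)) ?_
  split_ifs <;> norm_num

end Giant

theorem expander_minus_matching_keeps_giant (b : ℝ) (hb : 0 < b) (d : ℕ) (hd : 3 ≤ d)
    (p : ℝ) (hp : 1 / ((d : ℝ) - 1) < p) (hp1 : p < 1) :
    ∃ c > (0:ℝ), ∃ C > (0:ℝ), ∃ δ > (0:ℝ), ∃ ε > (0:ℝ), ∃ R : ℕ, 0 < R ∧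
      ∀ (V : Type) [Fintype V] [DecidableEq V] (G : SimpleGraph V),
        IsRegularExpander G b d → (R : ℕ∞) ≤ G.girth →
        ∃ M : Finset (Sym2 V), (↑M : Set (Sym2 V)) ⊆ G.edgeSet ∧
          (∀ e ∈ M, ∀ f ∈ M, e ≠ f → ∀ v : V, ¬(v ∈ e ∧ v ∈ f)) ∧
          δ * Fintype.card V ≤ M.card ∧
          1 - C * Real.exp (-c * Fintype.card V) ≤
            percProb (G.deleteEdges ↑M) p (fun H =>
              ∃ comp : H.ConnectedComponent,
                ε * Fintype.card V ≤ ((compVerts H comp).card : ℝ)) := by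
  have hd3 : (3 : ℝ) ≤ d := by exact_mod_cast hd
  have hm : ((d - 1 : ℕ) : ℝ) = d - 1 := by rw [Nat.cast_sub (by omega), Nat.cast_one]
  have hinv : 0 < 1 / ((d : ℝ) - 1) := by
    have : (0 : ℝ) < d - 1 := by linarith
    positivity
  -- the two sprinkling rounds
  obtain ⟨p₁, hp₁, hp₁p⟩ := exists_between hp
  have h₁1 : p₁ < 1 := hp₁p.trans hp1
  obtain ⟨p₂, h₂0, h₂1, hp₂⟩ : ∃ p₂ : ℝ, 0 < p₂ ∧ p₂ ≤ 1 ∧ p = 1 - (1 - p₁) * (1 - p₂) := by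
    have h : 0 < 1 - p₁ := by linarith
    refine ⟨(p - p₁) / (1 - p₁), div_pos (by linarith) h, ?_, ?_⟩
    · rw [div_le_one h]; linarith
    · field_simp; ring
  obtain ⟨α, hα0, hα1, hα⟩ : ∃ α : ℝ, 0 < α ∧ 12 * α ≤ 1 ∧
      p₁ * (1 - 12 * α) ^ (d - 1) + (1 - p₁) ≤ 1 - 12 * α := by
    refine ⟨(p₁ - 1 / ((d : ℝ) - 1)) / 12, by linarith, by linarith, ?_⟩
    have h := survival_inequality (m := d - 1) (by omega) (p := p₁) (by rwa [hm]) h₁1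
    rw [hm] at h
    rwa [mul_div_cancel₀ _ (by norm_num : (12 : ℝ) ≠ 0)]
  have hbα : 0 < b * α := mul_pos hb hα0
  obtain ⟨L, hL⟩ := exists_nat_gt (4 * d / (b * α))
  rw [div_lt_iff₀ hbα] at hL
  have hL0 : (0 : ℝ) < L := by
    by_contra h
    nlinarith
  have hκ : 0 < p₂ ^ L := pow_pos h₂0 L
  set κ := p₂ ^ L with hκdef
  have hpL : 1 - p₂ ^ L ≤ Real.exp (-κ) := by
    have := Real.add_one_le_exp (-κ)
    linarith
  set γ := κ * (b * α / (4 * L)) with hγdef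
  have hγ : 0 < γ := by positivity
  obtain ⟨k, hk⟩ := exists_nat_gt (max 1 (2 * Real.log 2 / γ))
  have hk1 : (1 : ℝ) < k := (le_max_left _ _).trans_lt hk
  have hk1' : 1 ≤ k := by exact_mod_cast hk1.le
  have hkγ : Real.log 2 / k ≤ γ / 2 := by
    have h := (le_max_right _ _).trans_lt hk
    rw [div_lt_iff₀ hγ] at h
    rw [div_le_iff₀ (by linarith)]
    linarith
  set c₁ := (12 * α) ^ 2 / (256 * d * k ^ 2) with hc₁def
  have hc₁ : 0 < c₁ := by positivity
  set c := min c₁ (γ / 2) with hcdef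
  have hc : 0 < c := lt_min hc₁ (by linarith)
  set D : ℝ := (d + 1) ^ k with hDdef
  have hD : (d : ℝ) + 1 ≤ D := le_self_pow₀ (by linarith) (by omega)
  set δ := min (b * α / 4) (1 / (8 * D)) with hδdef
  have hδ : 0 < δ := lt_min (by linarith) (by positivity)
  have hδ1 : δ ≤ b * α / 4 := min_le_left _ _
  have hδ2 : δ * (8 * D) ≤ 1 := by
    rw [← le_div_iff₀ (by positivity)]
    exact min_le_right _ _
  refine ⟨c, hc, 2 + Real.exp (c / δ), by positivity, δ, hδ, α, hα0, k + 1, by omega, ?_⟩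
  intro V _ _ G hG hgirth
  have hcyc : ∀ u (w : G.Walk u u), w.IsCycle → k < w.length := by
    intro u w hw
    have h := hgirth.trans (Nat.cast_le.2 hw.girth_le_length)
    exact_mod_cast h
  have hV : 0 < Fintype.card V := by
    by_contra h0
    have hem : IsEmpty V := Fintype.card_eq_zero_iff.1 (by omega)
    have hac : G.IsAcyclic := fun v => hem.elim v
    rw [SimpleGraph.girth_eq_zero.2 hac] at hgirth
    have : k + 1 ≤ 0 := by exact_mod_cast hgirth
    omega
  set n : ℝ := (Fintype.card V : ℝ) with hn
  have hn0 : 0 < n := by rw [hn]; exact_mod_cast hV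
  have hceil : (⌈δ * n⌉₊ : ℝ) < δ * n + 1 := Nat.ceil_lt_add_one (by positivity)
  obtain ⟨M, hME, hMd, hMc⟩ := exists_matching_card_eq (by omega) hG.2 ⌈δ * n⌉₊ (by
    have hpos : 1 ≤ ⌈δ * n⌉₊ := Nat.ceil_pos.2 (by positivity)
    have h : 2 * ((d : ℝ) + 1) * ((⌈δ * n⌉₊ - 1 : ℕ) : ℝ) < Fintype.card V := by
      rw [Nat.cast_sub hpos, Nat.cast_one, ← hn]
      calc 2 * ((d : ℝ) + 1) * (⌈δ * n⌉₊ - 1) < 2 * ((d : ℝ) + 1) * (δ * n) :=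
            mul_lt_mul_of_pos_left (by linarith) (by positivity)
        _ ≤ 2 * D * (δ * n) := by gcongr
        _ ≤ n := by linarith [mul_le_mul_of_nonneg_right hδ2 hn0.le]
    exact_mod_cast h)
  have hMn : (M.card : ℝ) < δ * n + 1 := by rwa [hMc]
  refine ⟨M, hME, hMd, by rw [hMc]; exact Nat.le_ceil _, ?_⟩
  by_cases hsmall : δ * n < 1
  · refine le_trans ?_ (percProb_nonneg _ (by linarith) hp1.le _)
    have h : 1 ≤ Real.exp (c / δ) * Real.exp (-c * n) := by
      rw [← Real.exp_add]
      refine Real.one_le_exp ?_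
      have h2 : n ≤ 1 / δ := by rw [le_div_iff₀ hδ]; linarith
      have h3 := mul_le_mul_of_nonneg_left h2 hc.le
      rw [mul_one_div] at h3
      linarith
    linarith [Real.exp_pos (-c * n)]
  · push Not at hsmall
    have hM1 : (M.card : ℝ) ≤ b * α / 2 * n := by
      linarith [mul_le_mul_of_nonneg_right hδ1 hn0.le]
    have hM2 : 4 * ((d : ℝ) + 1) ^ k * (M.card : ℝ) ≤ n := by
      rw [← hDdef]
      calc 4 * D * (M.card : ℝ) ≤ 4 * D * (2 * (δ * n)) := by gcongr; linarith
        _ = δ * (8 * D) * n := by ring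
        _ ≤ 1 * n := by gcongr
        _ = n := one_mul n
    have hmain := le_percProb_deleteEdges_giant hG hb (by omega) hk1' hV hcyc (by linarith)
      h₁1.le h₂0.le h₂1 hα0 hα1 hα hκ.le hpL hL hM1 hM2
    rw [hp₂]
    refine le_trans (sub_le_sub_left ?_ 1) hmain
    have e1 : Real.exp (-c₁ * n) ≤ Real.exp (-c * n) :=
      Real.exp_le_exp.2 (by
        linarith [mul_le_mul_of_nonneg_right (min_le_left c₁ (γ / 2)) hn0.le])
    have e2 : Real.exp (Real.log 2 / k * n - κ * (b * α / (4 * L) * n)) ≤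
        Real.exp (-c * n) := by
      refine Real.exp_le_exp.2 ?_
      rw [← mul_assoc, ← hγdef]
      linarith [mul_le_mul_of_nonneg_right (min_le_right c₁ (γ / 2)) hn0.le,
        mul_le_mul_of_nonneg_right hkγ hn0.le]
    have e3 : 0 ≤ Real.exp (c / δ) * Real.exp (-c * n) := by positivity
    linarith

end Percolation

end
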